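/- Let Y ⊆ X be a subset that is bounded above, and let p be any upper bound of Y (i.e. y ≼ p for all y ∈ Y). Then the element s := (⨆_{z ∈ Y} ⟨z = p⟩) • p is a least upper bound of Y for the partial order ≼: (a) y ≼ s for every y ∈ Y, and (b) for every upper bound q of Y (i.e. y ≼ q for all y ∈ Y), s ≼ q. -/

import Mathlib

/-- A set `X` equipped with an action of a Heyting algebra `Ω` (regarded as a
monoid under the meet operation `⊓` with unit `⊤`) together with an
`Ω`-valued equality (truth-value assignment) `e p q = ⟨p = q⟩`. -/
structure HeytingValuedSet (Ω : Type*) [Order.Frame Ω] (X : Type*) where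
  /-- the monoid action `•` of `(Ω, ⊓, ⊤)` on `X` -/
  act : Ω → X → X
  /-- the truth value `⟨p = q⟩` of the assertion `p = q` -/
  e : X → X → Ω
  act_inf : ∀ (α β : Ω) (p : X), act (α ⊓ β) p = act α (act β p)
  act_top : ∀ p : X, act ⊤ p = p
  welldef : ∀ p q : X, act (e p q) p = act (e p q) q
  unit_bound : ∀ (α : Ω) (p : X), α ≤ e (act α p) p
  e_symm : ∀ p q : X, e p q ≤ e q p
  e_trans : ∀ p q r : X, e p q ⊓ e q r ≤ e p r

/-- The relation `p ≼ q` on `X`: there exists `α ∈ Ω` with `p = α • q`. -/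
def HeytingValuedSet.ple {Ω : Type*} [Order.Frame Ω] {X : Type*}
    (h : HeytingValuedSet Ω X) (p q : X) : Prop :=
  ∃ α : Ω, p = h.act α q

/-!
By transitivity, any `y` lying below both `p` and `q` satisfies `⟨p = q⟩ • y = y`. Hence if `q` is
an upper bound of `Y`, then `⟨p = q⟩ • p` agrees with `p` on the truth value `⟨z = p⟩`, for each
`z ∈ Y`. Agreement passes to joins of truth values, so it holds on `σ = ⨆ z ∈ Y, ⟨z = p⟩`, and
therefore `σ • p = σ • ⟨p = q⟩ • p = σ • ⟨p = q⟩ • q ≼ q`.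
-/

namespace HeytingValuedSet

variable {Ω X : Type*} [Order.Frame Ω]

section Action

variable (h : HeytingValuedSet Ω X)

theorem act_left_comm (α β : Ω) (p : X) : h.act α (h.act β p) = h.act β (h.act α p) := by
  rw [← h.act_inf, inf_comm, h.act_inf]

theorem act_act_of_le {α β : Ω} (hαβ : α ≤ β) (p : X) : h.act α (h.act β p) = h.act α p := by
  rw [← h.act_inf, inf_eq_left.mpr hαβ]

theorem act_eq_act_iff_le_e {α : Ω} {p q : X} : h.act α p = h.act α q ↔ α ≤ h.e p q := by
  constructor
  · intro hpq
    have hp : α ≤ h.e p (h.act α p) := (h.unit_bound α p).trans (h.e_symm _ _)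
    have hq : α ≤ h.e (h.act α p) q := hpq ▸ h.unit_bound α q
    exact (le_inf hp hq).trans (h.e_trans _ _ _)
  · intro hα
    rw [← h.act_act_of_le hα p, h.welldef, h.act_act_of_le hα]

theorem act_iSup_congr {ι : Sort*} {α : ι → Ω} {p q : X}
    (hα : ∀ i, h.act (α i) p = h.act (α i) q) : h.act (⨆ i, α i) p = h.act (⨆ i, α i) q :=
  h.act_eq_act_iff_le_e.mpr <| iSup_le fun i => h.act_eq_act_iff_le_e.mp (hα i)

end Action

namespace ple

variable {h : HeytingValuedSet Ω X} {p q y : X}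

theorem act_e_left (hpq : h.ple p q) : h.act (h.e p q) p = p := by
  obtain ⟨α, rfl⟩ := hpq
  rw [h.act_left_comm, h.act_act_of_le (h.unit_bound α q)]

theorem act_e_right (hpq : h.ple p q) : h.act (h.e p q) q = p := by
  rw [← h.welldef, hpq.act_e_left]

theorem act_right_of_e_le {β : Ω} (hyp : h.ple y p) (hβ : h.e y p ≤ β) : h.ple y (h.act β p) :=
  ⟨h.e y p, by rw [h.act_act_of_le hβ, hyp.act_e_right]⟩

theorem act_e_of_ple_of_ple (hyp : h.ple y p) (hyq : h.ple y q) : h.act (h.e p q) y = y := by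
  have he : h.e y p ⊓ h.e y q ≤ h.e p q :=
    (inf_le_inf_right _ (h.e_symm y p)).trans (h.e_trans p y q)
  have hy : h.act (h.e y p ⊓ h.e y q) y = y := by
    rw [h.act_inf, hyq.act_e_left, hyp.act_e_left]
  calc h.act (h.e p q) y
      = h.act (h.e p q) (h.act (h.e y p ⊓ h.e y q) y) := by rw [hy]
    _ = h.act (h.e y p ⊓ h.e y q) y := by rw [h.act_left_comm, h.act_act_of_le he]
    _ = y := hy

end ple

theorem act_iSup_e_ple (h : HeytingValuedSet Ω X) {Y : Set X} {p q : X}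
    (hp : ∀ y ∈ Y, h.ple y p) (hq : ∀ y ∈ Y, h.ple y q) :
    h.ple (h.act (⨆ z ∈ Y, h.e z p) p) q := by
  have agree : ∀ z ∈ Y, h.act (h.e z p) (h.act (h.e p q) p) = h.act (h.e z p) p := fun z hz => by
    rw [h.act_left_comm, (hp z hz).act_e_right, (hp z hz).act_e_of_ple_of_ple (hq z hz)]
  refine ⟨(⨆ z ∈ Y, h.e z p) ⊓ h.e p q, ?_⟩
  calc h.act (⨆ z ∈ Y, h.e z p) p
      = h.act (⨆ z ∈ Y, h.e z p) (h.act (h.e p q) p) :=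
        (h.act_iSup_congr fun z => h.act_iSup_congr (agree z)).symm
    _ = h.act ((⨆ z ∈ Y, h.e z p) ⊓ h.e p q) q := by rw [h.welldef, ← h.act_inf]

end HeytingValuedSet

/-- Let `Ω` be a frame (complete Heyting algebra) and `Y ⊆ X` a subset bounded
above, with `p` any upper bound of `Y`.  Then
`s := (⨆ z ∈ Y, ⟨z = p⟩) • p` is a least upper bound of `Y` for `≼`:
(a) `y ≼ s` for every `y ∈ Y`, and (b) `s ≼ q` for every upper bound `q`. -/
theorem stmt_9 {Ω X : Type*} [Order.Frame Ω] (h : HeytingValuedSet Ω X)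
    (Y : Set X) (p : X) (hp : ∀ y ∈ Y, h.ple y p) :
    (∀ y ∈ Y, h.ple y (h.act (⨆ z ∈ Y, h.e z p) p)) ∧
    (∀ q : X, (∀ y ∈ Y, h.ple y q) → h.ple (h.act (⨆ z ∈ Y, h.e z p) p) q) :=
  ⟨fun y hy => (hp y hy).act_right_of_e_le (le_iSup₂ (f := fun z (_ : z ∈ Y) => h.e z p) y hy),
    fun _ hq => h.act_iSup_e_ple hp hq⟩
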